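/- Every finite simple graph in which every vertex has degree at most 2 admits a proper 3-colouring (adjacent vertices receive distinct colours) whose three colour classes have sizes that pairwise differ by at most 1; equivalently, if the graph has N vertices then each colour class has size between ⌊N/3⌋ and ⌈N/3⌉. -/

import Mathlib

open Classical in
theorem aux_conn {W : Type*} [Fintype W] (K : SimpleGraph W) (hK : K.Connected)
    (A : Finset W) (hA : ∀ v w, K.Adj v w → (v ∈ A ↔ w ∉ A))
    (hdeg : ∀ v, K.degree v ≤ 2) : A.card ≤ (Aᶜ).card + 1 := by
  have h1 := hK.card_vert_le_card_edgeSet_add_one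
  have hb : K.IsBipartiteWith (A : Set W) ((Aᶜ : Finset W) : Set W) := by
    refine ⟨?_, ?_⟩
    · rw [Finset.coe_compl]; exact disjoint_compl_right
    · intro v w h
      have := hA v w h
      simp only [Finset.mem_coe, Finset.mem_compl]
      tauto
  have h2 := SimpleGraph.isBipartiteWith_sum_degrees_eq_card_edges' hb
  have h3 : ∑ v ∈ Aᶜ, K.degree v ≤ (Aᶜ).card * 2 :=
    Finset.sum_le_card_nsmul _ _ _ (fun v _ => hdeg v)
  have h4 : Nat.card K.edgeSet = K.edgeFinset.card := by
    rw [Nat.card_eq_fintype_card, SimpleGraph.edgeFinset_card]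
  have h5 := Finset.card_add_card_compl A
  rw [Nat.card_eq_fintype_card] at h1
  omega

open Classical in
theorem aux_greedy {V : Type*} [Fintype V] (G : SimpleGraph V)
    (hdeg : ∀ v, G.degree v ≤ 2) (s : Finset V) :
    ∃ c : V → Fin 3, ∀ v ∈ s, ∀ w ∈ s, G.Adj v w → c v ≠ c w := by
  induction s using Finset.induction_on with
  | empty => exact ⟨fun _ => 0, by simp⟩
  | insert a s ha ih =>
    obtain ⟨c, hc⟩ := ih
    have : ∃ k : Fin 3, k ∉ (G.neighborFinset a).image c := by
      by_contra! h
      have h1 : ((G.neighborFinset a).image c) = Finset.univ := by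
        ext k; simp only [h k, Finset.mem_univ]
      have h2 : ((G.neighborFinset a).image c).card ≤ 2 :=
        Finset.card_image_le.trans (by simpa using hdeg a)
      rw [h1] at h2
      simp at h2
    obtain ⟨k, hk⟩ := this
    have hk' : ∀ w, G.Adj a w → c w ≠ k := by
      intro w hw h
      exact hk (Finset.mem_image.2 ⟨w, by simpa using hw, h⟩)
    refine ⟨Function.update c a k, ?_⟩
    intro v hv w hw hvw
    have hne := hvw.ne
    by_cases hva : v = a
    · subst hva
      rw [Function.update_self, Function.update_of_ne hne.symm]
      exact (hk' w hvw).symm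
    · by_cases hwa : w = a
      · subst hwa
        rw [Function.update_self, Function.update_of_ne hne]
        exact hk' v hvw.symm
      · rw [Function.update_of_ne hva, Function.update_of_ne hwa]
        exact hc v (Finset.mem_of_mem_insert_of_ne hv hva) w
          (Finset.mem_of_mem_insert_of_ne hw hwa) hvw

open Classical in
theorem aux_swap {V : Type*} [Fintype V] (G : SimpleGraph V)
    (hdeg : ∀ v, G.degree v ≤ 2) (c : V → Fin 3) (hc : ∀ v w, G.Adj v w → c v ≠ c w)
    (i j : Fin 3) (hij : i ≠ j)
    (hlt : (Finset.univ.filter fun v => c v = j).card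
      < (Finset.univ.filter fun v => c v = i).card) :
    ∃ c' : V → Fin 3, (∀ v w, G.Adj v w → c' v ≠ c' w) ∧
      (Finset.univ.filter fun v => c' v = i).card + 1
        = (Finset.univ.filter fun v => c v = i).card ∧
      (Finset.univ.filter fun v => c' v = j).card
        = (Finset.univ.filter fun v => c v = j).card + 1 ∧
      ∀ k, k ≠ i → k ≠ j → (Finset.univ.filter fun v => c' v = k).card
        = (Finset.univ.filter fun v => c v = k).card := by
  let H : SimpleGraph V :=
    { Adj := fun v w => G.Adj v w ∧ (c v = i ∨ c v = j) ∧ (c w = i ∨ c w = j)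
      symm := ⟨fun v w h => ⟨h.1.symm, h.2.2, h.2.1⟩⟩
      loopless := ⟨fun v h => G.loopless.irrefl v h.1⟩ }
  have hHadj : ∀ v w, H.Adj v w ↔ G.Adj v w ∧ (c v = i ∨ c v = j) ∧ (c w = i ∨ c w = j) :=
    fun v w => Iff.rfl
  have hsum : ∀ k, (Finset.univ.filter fun v => c v = k).card = ∑ C : H.ConnectedComponent,
      (Finset.univ.filter fun v => c v = k ∧ H.connectedComponentMk v = C).card := by
    intro k
    rw [Finset.card_eq_sum_card_fiberwise (f := H.connectedComponentMk) (t := Finset.univ)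
      (by intro x _; simp)]
    simp only [Finset.filter_filter]
  obtain ⟨C, hC⟩ : ∃ C : H.ConnectedComponent,
      (Finset.univ.filter fun v => c v = j ∧ H.connectedComponentMk v = C).card <
      (Finset.univ.filter fun v => c v = i ∧ H.connectedComponentMk v = C).card := by
    rw [hsum, hsum i] at hlt
    obtain ⟨C, -, h⟩ := Finset.exists_lt_of_sum_lt hlt
    exact ⟨C, h⟩
  -- all vertices of C are coloured i or j
  have hCol : ∀ v, H.connectedComponentMk v = C → c v = i ∨ c v = j := by
    obtain ⟨u, hu⟩ := Finset.card_pos.1 (lt_of_le_of_lt (Nat.zero_le _) hC)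
    simp only [Finset.mem_filter, Finset.mem_univ, true_and] at hu
    intro v hv
    have hr : H.Reachable v u := SimpleGraph.ConnectedComponent.exact (hv.trans hu.2.symm)
    obtain ⟨p⟩ := hr
    cases p with
    | nil => exact Or.inl hu.1
    | cons h _ => exact h.2.1
  -- the imbalance is at most one
  have hle : (Finset.univ.filter fun v => c v = i ∧ H.connectedComponentMk v = C).card ≤
      (Finset.univ.filter fun v => c v = j ∧ H.connectedComponentMk v = C).card + 1 := by
    have hconn := C.connected_toSimpleGraph
    have hmem : ∀ v, v ∈ C.supp ↔ H.connectedComponentMk v = C := fun v => Iff.rfl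
    have key := aux_conn C.toSimpleGraph hconn
      (Finset.univ.filter fun v => c v.1 = i) (by
        intro v w h
        have h' : H.Adj v.1 w.1 := h
        have := hc _ _ h'.1
        have h2 := h'.2
        simp only [Finset.mem_filter, Finset.mem_univ, true_and]
        grind) (by
        intro v
        refine le_trans ?_ (hdeg v.1)
        rw [← SimpleGraph.card_neighborFinset_eq_degree,
          ← SimpleGraph.card_neighborFinset_eq_degree]
        refine Finset.card_le_card_of_injOn (fun w => w.1) ?_ (fun _ _ _ _ h => Subtype.ext h)
        intro w hw
        have h' : C.toSimpleGraph.Adj v w := by simpa using hw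
        have h'' : H.Adj v.1 w.1 := h'
        simpa using h''.1)
    have e1 : (Finset.univ.filter fun v => c v = i ∧ H.connectedComponentMk v = C).card ≤
        (Finset.univ.filter fun v : C => c v.1 = i).card := by
      rw [← Finset.card_map (Function.Embedding.subtype _)]
      apply Finset.card_le_card
      intro v hv
      simp only [Finset.mem_filter, Finset.mem_univ, true_and] at hv
      exact Finset.mem_map.2 ⟨⟨v, hv.2⟩, by simpa using hv.1, rfl⟩
    have e2 : ((Finset.univ.filter fun v : C => c v.1 = i)ᶜ).card ≤
        (Finset.univ.filter fun v => c v = j ∧ H.connectedComponentMk v = C).card := by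
      refine Finset.card_le_card_of_injOn (fun w => w.1) ?_ (fun _ _ _ _ h => Subtype.ext h)
      intro w hw
      have h1 : c w.1 ≠ i := by simpa using hw
      have h2 : H.connectedComponentMk w.1 = C := w.2
      have := hCol _ h2
      simp only [Finset.coe_filter, Finset.mem_univ, true_and, Set.mem_ofPred_eq]
      exact ⟨by tauto, h2⟩
    refine e1.trans (key.trans (Nat.add_le_add_right ?_ 1))
    convert e2
  have hsplit : ∀ (d : V → Fin 3) k, (Finset.univ.filter fun v => d v = k).card =
      (Finset.univ.filter fun v => d v = k ∧ H.connectedComponentMk v = C).card +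
      (Finset.univ.filter fun v => d v = k ∧ ¬ H.connectedComponentMk v = C).card := by
    intro d k
    rw [← Finset.filter_filter, ← Finset.filter_filter, Finset.card_filter_add_card_filter_not]
  let c' : V → Fin 3 := fun v => if H.connectedComponentMk v = C then Equiv.swap i j (c v) else c v
  have hin : ∀ v, H.connectedComponentMk v = C → c' v = Equiv.swap i j (c v) :=
    fun v h => if_pos h
  have hout : ∀ v, ¬ H.connectedComponentMk v = C → c' v = c v := fun v h => if_neg h
  have hcin : ∀ k, (Finset.univ.filter fun v => c' v = k ∧ H.connectedComponentMk v = C) =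
      (Finset.univ.filter fun v => c v = Equiv.swap i j k ∧ H.connectedComponentMk v = C) := by
    intro k
    ext v
    simp only [Finset.mem_filter, Finset.mem_univ, true_and]
    refine and_congr_left fun h => ?_
    rw [hin v h, Equiv.swap_apply_eq_iff]
  have hcout : ∀ k, (Finset.univ.filter fun v => c' v = k ∧ ¬ H.connectedComponentMk v = C) =
      (Finset.univ.filter fun v => c v = k ∧ ¬ H.connectedComponentMk v = C) := by
    intro k
    ext v
    simp only [Finset.mem_filter, Finset.mem_univ, true_and]
    refine and_congr_left fun h => ?_
    rw [hout v h]
  have hcross : ∀ v w, G.Adj v w → H.connectedComponentMk v = C →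
      ¬ H.connectedComponentMk w = C → c' v ≠ c' w := by
    intro v w hvw hv hw
    rw [hin v hv, hout w hw]
    have h1 : ¬ H.Adj v w := fun h =>
      hw ((SimpleGraph.ConnectedComponent.sound h.reachable).symm.trans hv)
    rw [hHadj] at h1
    have h2 := hCol v hv
    have h3 : ¬ (c w = i ∨ c w = j) := fun h => h1 ⟨hvw, h2, h⟩
    rcases h2 with h2 | h2
    · rw [h2, Equiv.swap_apply_left]; tauto
    · rw [h2, Equiv.swap_apply_right]; tauto
  refine ⟨c', ?_, ?_, ?_, ?_⟩
  · intro v w hvw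
    by_cases hv : H.connectedComponentMk v = C
    · by_cases hw : H.connectedComponentMk w = C
      · rw [hin v hv, hin w hw]
        exact fun h => hc v w hvw ((Equiv.swap i j).injective h)
      · exact hcross v w hvw hv hw
    · by_cases hw : H.connectedComponentMk w = C
      · exact (hcross w v hvw.symm hw hv).symm
      · rw [hout v hv, hout w hw]
        exact hc v w hvw
  · rw [hsplit c' i, hsplit c i, hcin, hcout, Equiv.swap_apply_left]
    omega
  · rw [hsplit c' j, hsplit c j, hcin, hcout, Equiv.swap_apply_right]
    omega
  · intro k hki hkj
    rw [hsplit c' k, hsplit c k, hcin, hcout, Equiv.swap_apply_of_ne_of_ne hki hkj]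

open Classical in
theorem aux_main {V : Type*} [Fintype V] (G : SimpleGraph V)
    (hdeg : ∀ v, G.degree v ≤ 2) :
    ∃ c : V → Fin 3, (∀ v w, G.Adj v w → c v ≠ c w) ∧
      (∀ i j : Fin 3,
        (Finset.univ.filter fun v => c v = i).card
          ≤ (Finset.univ.filter fun v => c v = j).card + 1) := by
  obtain ⟨c₀, hc₀⟩ := aux_greedy G hdeg Finset.univ
  let S : Finset (V → Fin 3) := Finset.univ.filter fun c => ∀ v w, G.Adj v w → c v ≠ c w
  have hS : S.Nonempty := ⟨c₀, by
    simp only [S, Finset.mem_filter, Finset.mem_univ, true_and]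
    exact fun v w h => hc₀ v (Finset.mem_univ _) w (Finset.mem_univ _) h⟩
  obtain ⟨c, hcS, hmin⟩ := Finset.exists_min_image S
    (fun c => ∑ k : Fin 3, (Finset.univ.filter fun v => c v = k).card ^ 2) hS
  have hc : ∀ v w, G.Adj v w → c v ≠ c w := (Finset.mem_filter.1 hcS).2
  refine ⟨c, hc, ?_⟩
  intro i j
  by_contra! hlt
  have hij : i ≠ j := by rintro rfl; omega
  obtain ⟨c', hc', h1, h2, h3⟩ := aux_swap G hdeg c hc i j hij (by omega)
  have hm := hmin c' (Finset.mem_filter.2 ⟨Finset.mem_univ _, hc'⟩)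
  have hdec : ∀ f : Fin 3 → ℕ, ∑ k, f k = f i + (f j + ∑ k ∈ (Finset.univ.erase i).erase j, f k) := by
    intro f
    rw [Finset.add_sum_erase _ _ (by simp [hij.symm]), Finset.add_sum_erase _ _ (by simp)]
  rw [hdec, hdec fun k => (Finset.univ.filter fun v => c' v = k).card ^ 2] at hm
  have hrest : ∑ k ∈ (Finset.univ.erase i).erase j, (Finset.univ.filter fun v => c' v = k).card ^ 2
      = ∑ k ∈ (Finset.univ.erase i).erase j, (Finset.univ.filter fun v => c v = k).card ^ 2 := by
    refine Finset.sum_congr rfl fun k hk => ?_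
    simp only [Finset.mem_erase] at hk
    rw [h3 k hk.2.1 hk.1]
  rw [hrest, h2, ← h1] at hm
  rw [← h1] at hlt
  nlinarith

/-- Every finite simple graph of maximal degree at most 2 admits a proper 3-colouring whose
colour classes have sizes pairwise differing by at most 1; equivalently, each colour class
has size between `⌊N/3⌋` and `⌈N/3⌉` where `N` is the number of vertices. -/
theorem stmt10 {V : Type*} [Fintype V] (G : SimpleGraph V) [DecidableRel G.Adj]
    (hdeg : ∀ v, G.degree v ≤ 2) :
    ∃ c : V → Fin 3,
      (∀ v w, G.Adj v w → c v ≠ c w) ∧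
      (∀ i j : Fin 3,
        (Finset.univ.filter fun v => c v = i).card
          ≤ (Finset.univ.filter fun v => c v = j).card + 1) ∧
      (∀ i : Fin 3,
        Fintype.card V / 3 ≤ (Finset.univ.filter fun v => c v = i).card ∧
        (Finset.univ.filter fun v => c v = i).card ≤ (Fintype.card V + 2) / 3) := by
  obtain ⟨c, hc, hb⟩ := aux_main G (fun v => by convert hdeg v)
  have hb' : ∀ i j : Fin 3,
        (Finset.univ.filter fun v => c v = i).card
          ≤ (Finset.univ.filter fun v => c v = j).card + 1 := by
    intro i j
    convert hb i j
  refine ⟨c, hc, hb', ?_⟩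
  have hN : Fintype.card V = ∑ k : Fin 3, (Finset.univ.filter fun v => c v = k).card := by
    rw [← Finset.card_univ]
    exact Finset.card_eq_sum_card_fiberwise (by intro x _; simp)
  rw [Fin.sum_univ_three] at hN
  intro i
  have a0 := hb' i 0
  have a1 := hb' i 1
  have a2 := hb' i 2
  have b0 := hb' 0 i
  have b1 := hb' 1 i
  have b2 := hb' 2 i
  have hi : i = 0 ∨ i = 1 ∨ i = 2 := by fin_cases i <;> simp
  rcases hi with rfl | rfl | rfl <;> constructor <;> omega
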